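/- arXiv:2410.20625 — 2 statements merged into one kernel-verified Lean document; each statement's English description precedes it below -/
import Mathlib

section
/- Regret decomposition for preconditioned online gradient descent: let d, T ≥ 1, η > 0, let θ₁, …, θ_{T+1}, θ* ∈ ℝ^d, g₁, …, g_T ∈ ℝ^d, and let X₁, …, X_T ∈ ℝ^{d×d} be symmetric positive definite matrices such that θ_{t+1} = θ_t − η X_t g_t for each t = 1, …, T. Then Σ_{t=1}^T g_tᵀ(θ_t − θ*) ≤ (1/(2η))·(θ₁ − θ*)ᵀ X₁^{−1} (θ₁ − θ*) + (η/2)·Σ_{t=1}^T g_tᵀ X_t g_t + (1/(2η))·Σ_{t=2}^T (θ_t − θ*)ᵀ (X_t^{−1} − X_{t-1}^{−1}) (θ_t − θ*). -/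
open Matrix

lemma ogd_step {d : ℕ} (η : ℝ) (hη : 0 < η) (a g : Fin d → ℝ)
    (X : Matrix (Fin d) (Fin d) ℝ) (hX : X.PosDef) :
    g ⬝ᵥ a + (1 / (2 * η)) * ((a - η • X.mulVec g) ⬝ᵥ X⁻¹.mulVec (a - η • X.mulVec g)) =
      (1 / (2 * η)) * (a ⬝ᵥ X⁻¹.mulVec a) + (η / 2) * (g ⬝ᵥ X.mulVec g) := by
  have hu : IsUnit X.det := (Matrix.isUnit_iff_isUnit_det X).mp hX.isUnit
  have hs : Xᵀ = X := by simpa using hX.isHermitian.eq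
  have h1 : X⁻¹.mulVec (X.mulVec g) = g := by
    rw [Matrix.mulVec_mulVec, Matrix.nonsing_inv_mul X hu, Matrix.one_mulVec]
  have h2 : X.mulVec g ⬝ᵥ X⁻¹.mulVec a = g ⬝ᵥ a := by
    have h3 : X.mulVec g = Matrix.vecMul g X := by
      rw [← Matrix.mulVec_transpose, hs]
    rw [h3, ← Matrix.dotProduct_mulVec, Matrix.mulVec_mulVec, Matrix.mul_nonsing_inv X hu,
      Matrix.one_mulVec]
  simp only [Matrix.mulVec_sub, Matrix.mulVec_smul, sub_dotProduct, dotProduct_sub,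
    smul_dotProduct, dotProduct_smul, h1, h2, smul_eq_mul]
  rw [dotProduct_comm a g, dotProduct_comm (X.mulVec g) g]
  field_simp
  ring

/-- Regret decomposition for preconditioned online gradient descent:
if `θ_{t+1} = θ_t - η X_t g_t` for `t = 1, …, T` with symmetric positive definite
preconditioners `X_t`, then
`Σ_t gₜᵀ(θₜ - θ*) ≤ (1/2η)(θ₁-θ*)ᵀX₁⁻¹(θ₁-θ*) + (η/2)Σ_t gₜᵀXₜgₜ
  + (1/2η)Σ_{t=2}^T (θₜ-θ*)ᵀ(Xₜ⁻¹ - X_{t-1}⁻¹)(θₜ-θ*)`. -/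
theorem preconditioned_ogd_regret_decomposition (d T : ℕ) (hd : 1 ≤ d) (hT : 1 ≤ T)
    (η : ℝ) (hη : 0 < η)
    (θ : ℕ → (Fin d → ℝ)) (θstar : Fin d → ℝ) (g : ℕ → (Fin d → ℝ))
    (X : ℕ → Matrix (Fin d) (Fin d) ℝ)
    (hX : ∀ t ∈ Finset.Icc 1 T, (X t).PosDef)
    (hupd : ∀ t ∈ Finset.Icc 1 T, θ (t + 1) = θ t - η • (X t).mulVec (g t)) :
    ∑ t ∈ Finset.Icc 1 T, g t ⬝ᵥ (θ t - θstar) ≤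
      (1 / (2 * η)) * ((θ 1 - θstar) ⬝ᵥ (X 1)⁻¹.mulVec (θ 1 - θstar)) +
      (η / 2) * ∑ t ∈ Finset.Icc 1 T, g t ⬝ᵥ (X t).mulVec (g t) +
      (1 / (2 * η)) * ∑ t ∈ Finset.Icc 2 T,
        (θ t - θstar) ⬝ᵥ ((X t)⁻¹ - (X (t - 1))⁻¹).mulVec (θ t - θstar) := by
  have key : ∀ n, 1 ≤ n → n ≤ T →
      ∑ t ∈ Finset.Icc 1 n, g t ⬝ᵥ (θ t - θstar) +
        (1 / (2 * η)) * ((θ (n + 1) - θstar) ⬝ᵥ (X n)⁻¹.mulVec (θ (n + 1) - θstar)) =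
      (1 / (2 * η)) * ((θ 1 - θstar) ⬝ᵥ (X 1)⁻¹.mulVec (θ 1 - θstar)) +
      (η / 2) * ∑ t ∈ Finset.Icc 1 n, g t ⬝ᵥ (X t).mulVec (g t) +
      (1 / (2 * η)) * ∑ t ∈ Finset.Icc 2 n,
        (θ t - θstar) ⬝ᵥ ((X t)⁻¹ - (X (t - 1))⁻¹).mulVec (θ t - θstar) := by
    have hstep : ∀ n, 1 ≤ n → n ≤ T → _ := fun n h1 h2 =>
      ogd_step η hη (θ n - θstar) (g n) (X n) (hX n (Finset.mem_Icc.mpr ⟨h1, h2⟩))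
    have hθ : ∀ n, 1 ≤ n → n ≤ T →
        θ (n + 1) - θstar = θ n - θstar - η • (X n).mulVec (g n) := fun n h1 h2 => by
      rw [hupd n (Finset.mem_Icc.mpr ⟨h1, h2⟩), sub_right_comm]
    intro n hn
    induction n, hn using Nat.le_induction with
    | base =>
      intro h
      have := hstep 1 le_rfl h
      rw [← hθ 1 le_rfl h] at this
      simpa using this
    | succ n hn ih =>
      intro h
      have h0 := ih (by omega)
      have h1 := hstep (n + 1) (by omega) h
      rw [← hθ (n + 1) (by omega) h] at h1
      rw [Finset.sum_Icc_succ_top (by omega), Finset.sum_Icc_succ_top (by omega),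
        Finset.sum_Icc_succ_top (by omega)]
      simp only [Nat.add_sub_cancel, Matrix.sub_mulVec, dotProduct_sub] at h0 h1 ⊢
      linarith
  have hk := key T hT le_rfl
  have hnn : 0 ≤ (θ (T + 1) - θstar) ⬝ᵥ (X T)⁻¹.mulVec (θ (T + 1) - θstar) := by
    have := (hX T (Finset.mem_Icc.mpr ⟨hT, le_rfl⟩)).inv.posSemidef.dotProduct_mulVec_nonneg
      (θ (T + 1) - θstar)
    simpa using this
  have : 0 ≤ (1 / (2 * η)) *
      ((θ (T + 1) - θstar) ⬝ᵥ (X T)⁻¹.mulVec (θ (T + 1) - θstar)) := by positivity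
  linarith
end

section
/- Bound on the escaped mass: let G₁, …, G_T ∈ ℝ^{m×r} and P₁, …, P_T ∈ ℝ^{r×r} with P_t P_tᵀ ⪯ I_r for each t. Define V̄₀ = 0 and V̄_t = P_t V̄_{t-1} P_tᵀ + G_tᵀ G_t for t = 1, …, T, and let ρ₀ = 0 and ρ₁, …, ρ_T be any real sequence satisfying ρ_t ≤ ρ_{t-1} + trace(V̄_{t-1}) − trace(P_t V̄_{t-1} P_tᵀ) for each t. Then every V̄_t is symmetric positive semidefinite and ρ_T ≤ Σ_{t=1}^T trace(G_tᵀ G_t) − trace(V̄_T); in particular, if ‖G_t‖_F ≤ G for all t, then ρ_T ≤ G²·T. -/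
open Matrix

/-- The Frobenius norm of a real matrix. -/
noncomputable def frobNorm {m r : ℕ} (M : Matrix (Fin m) (Fin r) ℝ) : ℝ :=
  Real.sqrt (∑ i, ∑ j, (M i j) ^ 2)

/-- Bound on the escaped mass: with `V̄_t = P_t V̄_{t-1} P_tᵀ + G_tᵀ G_t` (starting from
`V̄₀ = 0`) where `P_t P_tᵀ ⪯ I`, and `ρ_t ≤ ρ_{t-1} + trace(V̄_{t-1}) - trace(P_t V̄_{t-1} P_tᵀ)`
(starting from `ρ₀ = 0`), every `V̄_t` is positive semidefinite and
`ρ_T ≤ Σ_t trace(G_tᵀ G_t) - trace(V̄_T)`; in particular `‖G_t‖_F ≤ G` implies `ρ_T ≤ G² T`. -/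
theorem escaped_mass_bound (m r T : ℕ)
    (G : ℕ → Matrix (Fin m) (Fin r) ℝ)
    (P : ℕ → Matrix (Fin r) (Fin r) ℝ)
    (hP : ∀ t ∈ Finset.Icc 1 T,
      ((1 : Matrix (Fin r) (Fin r) ℝ) - P t * (P t)ᵀ).PosSemidef)
    (V : ℕ → Matrix (Fin r) (Fin r) ℝ)
    (hV0 : V 0 = 0)
    (hVt : ∀ t ∈ Finset.Icc 1 T, V t = P t * V (t - 1) * (P t)ᵀ + (G t)ᵀ * G t)
    (ρ : ℕ → ℝ) (hρ0 : ρ 0 = 0)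
    (hρ : ∀ t ∈ Finset.Icc 1 T,
      ρ t ≤ ρ (t - 1) + (V (t - 1)).trace - (P t * V (t - 1) * (P t)ᵀ).trace) :
    (∀ t ≤ T, (V t).PosSemidef) ∧
    ρ T ≤ (∑ t ∈ Finset.Icc 1 T, ((G t)ᵀ * G t).trace) - (V T).trace ∧
    (∀ Gbound : ℝ, (∀ t ∈ Finset.Icc 1 T, frobNorm (G t) ≤ Gbound) →
      ρ T ≤ Gbound ^ 2 * T) := by
  have h1 : ∀ t ≤ T, (V t).PosSemidef := by
    intro t
    induction t with
    | zero => intro _; rw [hV0]; exact Matrix.PosSemidef.zero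
    | succ k ih =>
      intro hk
      rw [hVt (k+1) (by simp; omega)]
      have a := (ih (by omega)).mul_mul_conjTranspose_same (P (k+1))
      have b := Matrix.posSemidef_conjTranspose_mul_self (G (k+1))
      rw [Matrix.conjTranspose_eq_transpose_of_trivial] at a b
      exact a.add b
  have h2 : ∀ t ≤ T, ρ t ≤ (∑ s ∈ Finset.Icc 1 t, ((G s)ᵀ * G s).trace) - (V t).trace := by
    intro t
    induction t with
    | zero => intro _; simp [hV0, hρ0]
    | succ k ih =>
      intro hk
      have hm : k + 1 ∈ Finset.Icc 1 T := by simp; omega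
      have a := hρ (k+1) hm
      have b := congrArg Matrix.trace (hVt (k+1) hm)
      rw [Matrix.trace_add] at b
      have c := ih (by omega)
      rw [Finset.sum_Icc_succ_top (by omega)]
      simp only [Nat.add_sub_cancel] at a b
      linarith
  refine ⟨h1, h2 T le_rfl, ?_⟩
  intro B hB
  have h3 : ∀ t ∈ Finset.Icc 1 T, ((G t)ᵀ * G t).trace ≤ B ^ 2 := by
    intro t ht
    have e : ((G t)ᵀ * G t).trace = ∑ i, ∑ j, (G t i j) ^ 2 := by
      simp only [Matrix.trace, Matrix.diag, Matrix.mul_apply, Matrix.transpose_apply]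
      rw [Finset.sum_comm]
      simp only [sq]
    rw [e]
    exact (Real.sqrt_le_iff.mp (hB t ht)).2
  have h4 := Finset.sum_le_sum h3
  have h5 := (h1 T le_rfl).trace_nonneg
  have h6 := h2 T le_rfl
  simp only [Finset.sum_const, Nat.card_Icc, Nat.add_sub_cancel, nsmul_eq_mul] at h4
  linarith
end
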